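/- Let A be a finite abelian group, N ≤ A a proper nontrivial subgroup, and D ⊆ A a divisible difference set relative to N with parameters (m,n,k,λ1,λ2), m, n > 1, satisfying the intersection condition and with k ≤ mn−k; put k_3 = k and k_4 = mn−k. Fix i ∈ {3,4} and suppose k_{7−i} = 2n and (m,n,k) ≠ (4,2,4). Let G = Dih(A) with reflecting element b, X2 = A\N, X3 = Db, X4 = (A\D)b. Then the Cayley graph Cay(G, X2 ∪ X_i) is a proper divisible design graph with parameters v' = 2mn, k' = n(m−1) + k_i, λ1' = n(m−1) + k_i(k_i − m)/((n−1)m), λ2' = n(m−2) + k_i^2/(mn), m' = 2m, n' = n, whose canonical partition is into the right cosets of N in G. -/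

import Mathlib

open Classical

/-!
Two vertices `g ≠ h` of `Cay(G, S)` have `|S ∩ tS|` common neighbours, where `t = gh⁻¹`. For
`S = (A ∖ N) ∪ Eb` this is `|Nᶜ ∩ sNᶜ| + |E ∩ sE|` if `t = s ∈ A`, which takes only one value for
`s ∈ N` and one for `s ∉ N` because `E` is a divisible difference set; and it is `2(|E| - μ)` if
`t = sb`, because `E` meets every coset of `N` in `μ` elements. Counting pairs of elements of `E`
over the cosets of `N` gives `k = mμ`, `nλ₂ = kμ` and `k + (n - 1)λ₁ = kμ`, where `k = |E|`, and
these make the two values outside `N` agree when `mn - k = 2n`. The complement of `E` is again a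
divisible difference set with the intersection condition, so `i = 3` and `i = 4` are one case.
-/

section Counting

open MulOpposite (op)
open scoped Pointwise

variable {G : Type*} [Group G]

theorem natCard_mul_inv_mem (S : Set G) (g : G) : Nat.card {x : G // x * g⁻¹ ∈ S} = S.ncard :=
  Nat.card_congr ((Equiv.mulRight g⁻¹).subtypeEquiv fun _ ↦ Iff.rfl)

theorem natCard_mul_inv_mem_and_mul_inv_mem {S : Set G} (hS : S⁻¹ = S) (g h : G) :
    Nat.card {x : G // x * g⁻¹ ∈ S ∧ x * h⁻¹ ∈ S} = (S ∩ (g * h⁻¹) • S).ncard := by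
  have mem_inv (x : G) : x⁻¹ ∈ S ↔ x ∈ S := by rw [← Set.mem_inv, hS]
  refine Nat.card_congr (((Equiv.inv G).trans (Equiv.mulLeft g)).subtypeEquiv fun x ↦ ?_)
  rw [Set.mem_inter_iff, Set.mem_smul_set_iff_inv_smul_mem, ← mem_inv (x * g⁻¹),
    ← mem_inv (x * h⁻¹)]
  simp [mul_assoc]

theorem ncard_coe_subgroup (N : Subgroup G) : (N : Set G).ncard = Nat.card N :=
  (Nat.card_coe_set_eq _).symm

theorem natCard_prod_mul_inv_eq (S : Set G) (g : G) :
    Nat.card {pr : G × G // pr.1 ∈ S ∧ pr.2 ∈ S ∧ pr.1 * pr.2⁻¹ = g} = (S ∩ g • S).ncard := by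
  refine (Nat.card_congr (Equiv.ofBijective
    (fun x : ↥(S ∩ g • S) ↦ ⟨(x, g⁻¹ * x), x.2.1,
      Set.mem_smul_set_iff_inv_smul_mem.1 x.2.2, by simp⟩) ⟨?_, ?_⟩)).symm
  · exact fun x y h ↦ Subtype.ext (congrArg (fun z ↦ z.1.1) h)
  · rintro ⟨⟨x, y⟩, hx, hy, rfl⟩
    exact ⟨⟨x, hx, Set.mem_smul_set_iff_inv_smul_mem.2 (by simpa using hy)⟩, by simp⟩

theorem sum_ncard_inter_smul_eq_sum_ncard_inter_op_smul [Fintype G] (P Q H : Set G) :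
    ∑ h : H, (P ∩ (h : G) • Q).ncard = ∑ q : Q, (P ∩ op (q : G) • H).ncard := by
  have h_left (h : G) : (P ∩ h • Q).ncard = Nat.card {q : Q // h * q ∈ P} :=
    Nat.card_congr
      { toFun x := ⟨⟨h⁻¹ * x, Set.mem_smul_set_iff_inv_smul_mem.1 x.2.2⟩, by simp [x.2.1]⟩
        invFun q := ⟨h * q, q.2, Set.smul_mem_smul_set q.1.2⟩
        left_inv x := by simp
        right_inv q := by simp }
  have h_right (q : G) : (P ∩ op q • H).ncard = Nat.card {h : H // h * q ∈ P} :=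
    Nat.card_congr
      { toFun x := ⟨⟨x * q⁻¹, Set.mem_smul_set_iff_inv_smul_mem.1 x.2.2⟩, by simp [x.2.1]⟩
        invFun h := ⟨h * q, h.2, Set.smul_mem_smul_set h.1.2⟩
        left_inv x := by simp
        right_inv h := by simp }
  simp only [h_left, h_right, Nat.card_eq_fintype_card, Fintype.card_subtype]
  exact Finset.sum_card_bipartiteAbove_eq_sum_card_bipartiteBelow
    fun (h : H) (q : Q) ↦ (h * q : G) ∈ P

theorem ncard_compl_inter_smul_compl [Finite G] (S : Set G) (g : G) :
    (Sᶜ ∩ g • Sᶜ).ncard + 2 * S.ncard = Nat.card G + (S ∩ g • S).ncard := by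
  have h_union := Set.ncard_union_add_ncard_inter S (g • S)
  have h_compl := Set.ncard_add_ncard_compl (S ∪ g • S)
  rw [Set.ncard_smul_set] at h_union
  rw [Set.smul_set_compl, ← Set.compl_union]
  lia

theorem ncard_subgroup_inter_smul [Finite G] (N : Subgroup G) (g : G) :
    ((N : Set G) ∩ g • (N : Set G)).ncard = if g ∈ N then Nat.card N else 0 := by
  split_ifs with hg
  · rw [smul_coe_set hg, Set.inter_self, ncard_coe_subgroup]
  · rw [Set.ncard_eq_zero, ← Set.disjoint_iff_inter_eq_empty, Set.disjoint_left]
    intro x hx hxg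
    rw [Set.mem_smul_set_iff_inv_smul_mem, smul_eq_mul, SetLike.mem_coe,
      Subgroup.mul_mem_cancel_right N hx, inv_mem_iff] at hxg
    exact hg hxg

end Counting

section DihedralCayleyGraph

open MulOpposite (op)
open scoped Pointwise

variable {A : Type*} [CommGroup A]

/-- `E` is a divisible difference set relative to `N`, with the size of `E` left out of the
parameters. -/
def IsDivisibleDifferenceSet (N : Subgroup A) (E : Set A) (l1 l2 : ℕ) : Prop :=
  ∀ g : A, g ≠ 1 →
    Nat.card {pr : A × A // pr.1 ∈ E ∧ pr.2 ∈ E ∧ pr.1 * pr.2⁻¹ = g} = if g ∈ N then l1 else l2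

/-- The intersection condition: `E` meets every coset of `N` in `μ` elements. -/
def IntersectionCondition (N : Subgroup A) (E : Set A) (μ : ℕ) : Prop :=
  ∀ g : A, Nat.card {x : A // x ∈ E ∧ x * g⁻¹ ∈ N} = μ

namespace IntersectionCondition

variable {N : Subgroup A} {E : Set A} {μ : ℕ}

theorem ncard_inter_smul (hE : IntersectionCondition N E μ) (g : A) :
    (E ∩ g • (N : Set A)).ncard = μ := by
  rw [← hE g, ← Nat.card_coe_set_eq]
  refine Nat.card_congr (Equiv.subtypeEquivRight fun x ↦ ?_)
  rw [Set.mem_inter_iff, Set.mem_smul_set_iff_inv_smul_mem, smul_eq_mul, mul_comm, SetLike.mem_coe]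

theorem inv (hE : IntersectionCondition N E μ) : IntersectionCondition N E⁻¹ μ := by
  intro g
  rw [← hE g⁻¹]
  refine Nat.card_congr ((Equiv.inv A).subtypeEquiv fun x ↦ ?_)
  rw [Equiv.inv_apply, Set.mem_inv, inv_inv, ← inv_mem_iff (x := x * g⁻¹), mul_inv, inv_inv]

theorem sum_ncard_inter_smul [Fintype A] (hE : IntersectionCondition N E μ) (g : A) :
    ∑ h : N, (E ∩ (g * h) • E).ncard = E.ncard * μ := by
  have h_count := sum_ncard_inter_smul_eq_sum_ncard_inter_op_smul E (g • E) (N : Set A)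
  have h_coset (q : ↥(g • E)) : (E ∩ op (q : A) • (N : Set A)).ncard = μ := by
    rw [op_smul_eq_smul, hE.ncard_inter_smul]
  simp only [h_coset, Finset.sum_const, Finset.card_univ, smul_eq_mul,
    ← Nat.card_eq_fintype_card, Nat.card_coe_set_eq, Set.ncard_smul_set] at h_count
  simp only [mul_comm g, mul_smul]
  exact h_count

variable [Finite A]

theorem ncard_inter_compl_smul (hE : IntersectionCondition N E μ) (g : A) :
    (E ∩ (g • (N : Set A))ᶜ).ncard + μ = E.ncard := by
  have h_split := Set.ncard_inter_add_ncard_sdiff_eq_ncard E (g • (N : Set A))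
  rw [hE.ncard_inter_smul, Set.sdiff_eq] at h_split
  lia

theorem compl (hE : IntersectionCondition N E μ) :
    IntersectionCondition N Eᶜ (Nat.card N - μ) := by
  intro g
  have h_split := Set.ncard_inter_add_ncard_sdiff_eq_ncard (g • (N : Set A)) E
  have h_coset : (g • (N : Set A)).ncard = Nat.card N := by
    rw [Set.ncard_smul_set, ncard_coe_subgroup]
  rw [Set.inter_comm, hE.ncard_inter_smul, h_coset] at h_split
  have h_diff : Nat.card {x : A // x ∈ Eᶜ ∧ x * g⁻¹ ∈ N} = (g • (N : Set A) \ E).ncard :=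
    Nat.card_congr (Equiv.subtypeEquivRight fun x ↦ by
      rw [Set.mem_sdiff, and_comm, Set.mem_smul_set_iff_inv_smul_mem, smul_eq_mul, mul_comm,
        SetLike.mem_coe, Set.mem_compl_iff])
  lia

theorem ncard_eq_index_mul (hE : IntersectionCondition N E μ) : E.ncard = N.index * μ := by
  cases nonempty_fintype A
  have h_count := sum_ncard_inter_smul_eq_sum_ncard_inter_op_smul E (N : Set A) Set.univ
  simp only [Set.smul_set_univ, hE.ncard_inter_smul, Set.inter_univ, Finset.sum_const, smul_eq_mul,
    Finset.card_univ, ← Nat.card_eq_fintype_card, Nat.card_univ, SetLike.coe_sort_coe,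
    ← N.card_mul_index] at h_count
  exact (Nat.eq_of_mul_eq_mul_left Nat.card_pos (by linarith)).symm

end IntersectionCondition

namespace IsDivisibleDifferenceSet

variable {N : Subgroup A} {E : Set A} {l1 l2 μ : ℕ}

theorem ncard_inter_smul (hE : IsDivisibleDifferenceSet N E l1 l2) {g : A} (hg : g ≠ 1) :
    (E ∩ g • E).ncard = if g ∈ N then l1 else l2 := by
  rw [← natCard_prod_mul_inv_eq, hE g hg]

variable [Finite A]

theorem compl (hE : IsDivisibleDifferenceSet N E l1 l2) :
    IsDivisibleDifferenceSet N Eᶜ (Nat.card A + l1 - 2 * E.ncard)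
      (Nat.card A + l2 - 2 * E.ncard) := by
  intro g hg
  have h_compl := ncard_compl_inter_smul_compl E g
  rw [hE.ncard_inter_smul hg] at h_compl
  rw [natCard_prod_mul_inv_eq]
  split_ifs at h_compl ⊢ <;> lia

theorem card_mul_eq (hE : IsDivisibleDifferenceSet N E l1 l2)
    (hμ : IntersectionCondition N E μ) (hN : N ≠ ⊤) : Nat.card N * l2 = E.ncard * μ := by
  cases nonempty_fintype A
  obtain ⟨g, hg⟩ : ∃ g, g ∉ N := by
    by_contra! h
    exact hN ((Subgroup.eq_top_iff' N).2 h)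
  have h_term (h : N) : (E ∩ (g * h) • E).ncard = l2 := by
    have hgh : g * h ∉ N := (Subgroup.mul_mem_cancel_right N h.2).not.2 hg
    rw [hE.ncard_inter_smul (ne_of_mem_of_not_mem N.one_mem hgh).symm, if_neg hgh]
  rw [← hμ.sum_ncard_inter_smul g]
  simp [h_term, Nat.card_eq_fintype_card]

theorem ncard_add_eq (hE : IsDivisibleDifferenceSet N E l1 l2)
    (hμ : IntersectionCondition N E μ) : E.ncard + (Nat.card N - 1) * l1 = E.ncard * μ := by
  cases nonempty_fintype A
  have h_term (h : {h : N // h ≠ 1}) : (E ∩ (h : A) • E).ncard = l1 := by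
    rw [hE.ncard_inter_smul (by simpa using h.2), if_pos h.1.2]
  rw [← hμ.sum_ncard_inter_smul 1, Fintype.sum_eq_add_sum_subtype_ne _ 1]
  simp only [one_mul]
  simp [h_term, Nat.card_eq_fintype_card]

theorem lambda_one_eq (hE : IsDivisibleDifferenceSet N E l1 l2)
    (hμ : IntersectionCondition N E μ) (hN : 1 < Nat.card N) :
    (l1 : ℚ) = E.ncard * ((E.ncard : ℚ) - N.index) / (((Nat.card N : ℚ) - 1) * N.index) := by
  have h_pairs := hE.ncard_add_eq hμ
  have h_size := hμ.ncard_eq_index_mul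
  have h_index : (N.index : ℚ) ≠ 0 := Nat.cast_ne_zero.2 Subgroup.index_ne_zero_of_finite
  have h_card : (Nat.card N : ℚ) - 1 ≠ 0 := sub_ne_zero.2 (Nat.cast_ne_one.2 hN.ne')
  qify [hN.le] at h_pairs h_size
  rw [eq_div_iff (mul_ne_zero h_card h_index)]
  linear_combination N.index * h_pairs - E.ncard * h_size

theorem lambda_two_eq (hE : IsDivisibleDifferenceSet N E l1 l2)
    (hμ : IntersectionCondition N E μ) (hN : N ≠ ⊤) :
    (l2 : ℚ) = (E.ncard : ℚ) ^ 2 / (N.index * Nat.card N) := by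
  have h_pairs := hE.card_mul_eq hμ hN
  have h_size := hμ.ncard_eq_index_mul
  have h_index : (N.index : ℚ) ≠ 0 := Nat.cast_ne_zero.2 Subgroup.index_ne_zero_of_finite
  have h_card : (Nat.card N : ℚ) ≠ 0 := Nat.cast_ne_zero.2 Nat.card_pos.ne'
  qify at h_pairs h_size
  rw [eq_div_iff (mul_ne_zero h_index h_card)]
  linear_combination N.index * h_pairs - E.ncard * h_size

theorem add_two_mul_eq_ncard (hE : IsDivisibleDifferenceSet N E l1 l2)
    (hμ : IntersectionCondition N E μ) (hN : N ≠ ⊤)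
    (hk : N.index * Nat.card N = E.ncard + 2 * Nat.card N) : l2 + 2 * μ = E.ncard := by
  refine Nat.eq_of_mul_eq_mul_left (Nat.card_pos (α := N)) ?_
  calc Nat.card N * (l2 + 2 * μ)
    _ = (E.ncard + 2 * Nat.card N) * μ := by rw [mul_add, hE.card_mul_eq hμ hN]; ring
    _ = Nat.card N * (N.index * μ) := by rw [← hk]; ring
    _ = Nat.card N * E.ncard := by rw [hμ.ncard_eq_index_mul]

theorem card_add_ne (hE : IsDivisibleDifferenceSet N E l1 l2)
    (hμ : IntersectionCondition N E μ) (hN : N ≠ ⊤) (hn : 1 < Nat.card N)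
    (hk : N.index * Nat.card N = E.ncard + 2 * Nat.card N)
    (hne : ¬(N.index = 4 ∧ Nat.card N = 2)) : Nat.card N + l1 ≠ l2 := by
  rintro rfl
  have h_in := hE.ncard_add_eq hμ
  have h_out := hE.card_mul_eq hμ hN
  have h_size := hμ.ncard_eq_index_mul
  generalize N.index = m at *
  generalize Nat.card N = n at *
  generalize E.ncard = k at *
  have h_key : 2 * k = (k + 2 * n) * (n - 1) := by
    zify [hn.le] at *
    refine mul_left_cancel₀ (show (n : ℤ) ≠ 0 by lia) ?_
    linear_combination n * m * (h_in - h_out) - k * h_size + m * h_out + (n * (n-1) - k) * hk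
  have h_n : n = 2 := by
    by_contra h
    have : 2 ≤ n - 1 := by lia
    nlinarith
  subst h_n
  exact hne ⟨by lia, rfl⟩

end IsDivisibleDifferenceSet

/-- `G = Dih(A)` with `A` embedded by `ι` and reflecting element `b`. -/
structure IsGeneralizedDihedral {G : Type*} [Group G] (ι : A →* G) (b : G) : Prop where
  injective : Function.Injective ι
  mul_self : b * b = 1
  conj_eq (a : A) : b * ι a * b⁻¹ = ι a⁻¹
  notMem_range : b ∉ Set.range ι
  eq_or_eq_mul (g : G) : (∃ a, g = ι a) ∨ ∃ a, g = ι a * b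

/-- The subset `P ∪ Qb` of `G`, for `P, Q ⊆ A`. -/
def dihedralSet {G : Type*} [Group G] (ι : A →* G) (b : G) (P Q : Set A) : Set G :=
  ι '' P ∪ (fun a ↦ ι a * b) '' Q

namespace IsGeneralizedDihedral

variable {G : Type*} [Group G] {ι : A →* G} {b : G} {P Q : Set A}

theorem mul_map (hι : IsGeneralizedDihedral ι b) (a : A) : b * ι a = ι a⁻¹ * b := by
  rw [← hι.conj_eq, inv_mul_cancel_right]

theorem map_ne_map_mul (hι : IsGeneralizedDihedral ι b) (x y : A) : ι x ≠ ι y * b := fun h ↦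
  hι.notMem_range ⟨y⁻¹ * x, by rw [map_mul, h, map_inv, inv_mul_cancel_left]⟩

theorem map_mem_dihedralSet (hι : IsGeneralizedDihedral ι b) {a : A} :
    ι a ∈ dihedralSet ι b P Q ↔ a ∈ P := by
  simp [dihedralSet, hι.injective.eq_iff, (hι.map_ne_map_mul _ _).symm]

theorem map_mul_mem_dihedralSet (hι : IsGeneralizedDihedral ι b) {a : A} :
    ι a * b ∈ dihedralSet ι b P Q ↔ a ∈ Q := by
  simp [dihedralSet, hι.injective.eq_iff, hι.map_ne_map_mul]

theorem ncard_dihedralSet [Finite A] (hι : IsGeneralizedDihedral ι b) :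
    (dihedralSet ι b P Q).ncard = P.ncard + Q.ncard := by
  have h_disjoint : Disjoint (ι '' P) ((fun a ↦ ι a * b) '' Q) := by
    rw [Set.disjoint_left]
    rintro _ ⟨x, -, rfl⟩ ⟨y, -, h⟩
    exact hι.map_ne_map_mul x y h.symm
  have h_injective : Function.Injective fun a ↦ ι a * b :=
    (mul_left_injective b).comp hι.injective
  rw [dihedralSet, Set.ncard_union_eq h_disjoint, Set.ncard_image_of_injective _ hι.injective,
    Set.ncard_image_of_injective _ h_injective]

theorem natCard_eq [Finite A] (hι : IsGeneralizedDihedral ι b) : Nat.card G = 2 * Nat.card A := by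
  have h_univ : dihedralSet ι b Set.univ Set.univ = Set.univ :=
    Set.eq_univ_of_forall fun g ↦ by
      rcases hι.eq_or_eq_mul g with ⟨a, rfl⟩ | ⟨a, rfl⟩
      · exact hι.map_mem_dihedralSet.2 trivial
      · exact hι.map_mul_mem_dihedralSet.2 trivial
  rw [← Set.ncard_univ, ← h_univ, hι.ncard_dihedralSet, Set.ncard_univ, two_mul]

theorem dihedralSet_inter (hι : IsGeneralizedDihedral ι b) {P' Q' : Set A} :
    dihedralSet ι b P Q ∩ dihedralSet ι b P' Q' = dihedralSet ι b (P ∩ P') (Q ∩ Q') := by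
  ext g
  rcases hι.eq_or_eq_mul g with ⟨a, rfl⟩ | ⟨a, rfl⟩ <;>
    simp only [Set.mem_inter_iff, hι.map_mem_dihedralSet, hι.map_mul_mem_dihedralSet]

theorem inv_dihedralSet (hι : IsGeneralizedDihedral ι b) :
    (dihedralSet ι b P Q)⁻¹ = dihedralSet ι b P⁻¹ Q := by
  ext g
  rw [Set.mem_inv]
  rcases hι.eq_or_eq_mul g with ⟨a, rfl⟩ | ⟨a, rfl⟩
  · rw [← map_inv, hι.map_mem_dihedralSet, hι.map_mem_dihedralSet, Set.mem_inv]
  · have h_inv : (ι a * b)⁻¹ = ι a * b := by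
      rw [mul_inv_rev, inv_eq_of_mul_eq_one_left hι.mul_self, ← map_inv, hι.mul_map, inv_inv]
    rw [h_inv, hι.map_mul_mem_dihedralSet, hι.map_mul_mem_dihedralSet]

theorem map_smul_dihedralSet (s : A) :
    ι s • dihedralSet ι b P Q = dihedralSet ι b (s • P) (s • Q) := by
  simp only [dihedralSet, Set.image_union, ← Set.image_smul, Set.image_image, smul_eq_mul,
    map_mul, mul_assoc]

theorem map_mul_smul_dihedralSet (hι : IsGeneralizedDihedral ι b) (s : A) :
    (ι s * b) • dihedralSet ι b P Q = dihedralSet ι b (s • Q⁻¹) (s • P⁻¹) := by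
  have h_image (a : A) : ι s * b * ι a = ι (s * a⁻¹) * b := by
    rw [mul_assoc, hι.mul_map, ← mul_assoc, map_mul]
  have h_image' (a : A) : ι s * b * (ι a * b) = ι (s * a⁻¹) := by
    rw [← mul_assoc, h_image, mul_assoc, hι.mul_self, mul_one]
  simp only [dihedralSet, Set.image_union, ← Set.image_smul, ← Set.image_inv_eq_inv,
    Set.image_image, smul_eq_mul, h_image, h_image']
  exact Set.union_comm _ _

variable {N : Subgroup A} {E : Set A} {l1 l2 μ : ℕ}

theorem inv_dihedralSet_compl (hι : IsGeneralizedDihedral ι b) :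
    (dihedralSet ι b (N : Set A)ᶜ E)⁻¹ = dihedralSet ι b (N : Set A)ᶜ E := by
  rw [hι.inv_dihedralSet, Set.compl_inv, inv_coe_set]

theorem ncard_inter_mul_smul [Finite A] (hι : IsGeneralizedDihedral ι b)
    (hE : IntersectionCondition N E μ) (s : A) :
    (dihedralSet ι b (N : Set A)ᶜ E ∩ (ι s * b) • dihedralSet ι b (N : Set A)ᶜ E).ncard + 2 * μ
      = 2 * E.ncard := by
  have h_left : ((N : Set A)ᶜ ∩ s • E⁻¹).ncard + μ = E.ncard := by
    rw [← Set.ncard_inv E, ← hE.inv.ncard_inter_compl_smul s⁻¹, Set.inter_comm,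
      ← Set.ncard_smul_set s (E⁻¹ ∩ _), Set.smul_set_inter, ← Set.smul_set_compl, smul_inv_smul]
  have h_right : (E ∩ s • (N : Set A)ᶜ⁻¹).ncard + μ = E.ncard := by
    rw [Set.compl_inv, inv_coe_set, Set.smul_set_compl, hE.ncard_inter_compl_smul]
  rw [hι.map_mul_smul_dihedralSet, hι.dihedralSet_inter, hι.ncard_dihedralSet]
  lia

theorem ncard_inter_map_smul [Finite A] (hι : IsGeneralizedDihedral ι b)
    (hE : IsDivisibleDifferenceSet N E l1 l2) {s : A} (hs : s ≠ 1) :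
    (dihedralSet ι b (N : Set A)ᶜ E ∩ ι s • dihedralSet ι b (N : Set A)ᶜ E).ncard
        + 2 * Nat.card N
      = Nat.card A + if s ∈ N then Nat.card N + l1 else l2 := by
  have h_compl := ncard_compl_inter_smul_compl (N : Set A) s
  rw [ncard_coe_subgroup, ncard_subgroup_inter_smul] at h_compl
  rw [map_smul_dihedralSet, hι.dihedralSet_inter, hι.ncard_dihedralSet, hE.ncard_inter_smul hs]
  split_ifs at * <;> lia

theorem ncard_inter_smul [Finite A] (hι : IsGeneralizedDihedral ι b)
    (hE : IsDivisibleDifferenceSet N E l1 l2) (hμ : IntersectionCondition N E μ) (hN : N ≠ ⊤)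
    (hk : N.index * Nat.card N = E.ncard + 2 * Nat.card N) {t : G} (ht : t ≠ 1) :
    (dihedralSet ι b (N : Set A)ᶜ E ∩ t • dihedralSet ι b (N : Set A)ᶜ E).ncard
      = if t ∈ N.map ι then E.ncard + (Nat.card N + l1) else E.ncard + l2 := by
  rcases hι.eq_or_eq_mul t with ⟨s, rfl⟩ | ⟨s, rfl⟩
  · have h_count := hι.ncard_inter_map_smul hE (ne_of_apply_ne ι (ht.trans_eq (map_one ι).symm))
    rw [← N.card_mul_index, mul_comm (Nat.card N) N.index, hk] at h_count
    simp only [Subgroup.mem_map_iff_mem hι.injective]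
    split_ifs at h_count ⊢ <;> lia
  · have h_notMem : ι s * b ∉ N.map ι := by
      rintro ⟨a, -, h⟩
      exact hι.map_ne_map_mul a s h
    have h_size := hE.add_two_mul_eq_ncard hμ hN hk
    have h_count := hι.ncard_inter_mul_smul hμ s
    rw [if_neg h_notMem]
    lia

end IsGeneralizedDihedral

/-- `Cay(G, S)` is a proper divisible design graph with parameters `(v, k, l1, l2, m, n)` whose
canonical partition is into the right cosets of `H`. That there are `m` classes is not asserted
separately: each class has `n` elements, so there are `v / n` of them. -/
def IsProperDivisibleDesignCayley {G : Type*} [Group G] [Fintype G] (H : Subgroup G) (S : Set G)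
    (v k l1 l2 m n : ℕ) : Prop :=
  S⁻¹ = S ∧ (1 : G) ∉ S ∧ Fintype.card G = v ∧
    (∀ g : G, Nat.card {x : G // x * g⁻¹ ∈ H} = n) ∧
    (∀ g : G, Nat.card {x : G // x * g⁻¹ ∈ S} = k) ∧
    (∀ g h : G, g ≠ h → Nat.card {x : G // x * g⁻¹ ∈ S ∧ x * h⁻¹ ∈ S}
      = if g * h⁻¹ ∈ H then l1 else l2) ∧
    l1 ≠ l2 ∧ 1 < m ∧ 1 < n

theorem IsGeneralizedDihedral.isProperDivisibleDesignCayley [Finite A] {G : Type*} [Group G]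
    [Fintype G] {ι : A →* G} {b : G} (hι : IsGeneralizedDihedral ι b) {N : Subgroup A} {E : Set A}
    {l1 l2 μ : ℕ} (hE : IsDivisibleDifferenceSet N E l1 l2) (hμ : IntersectionCondition N E μ)
    (hN : N ≠ ⊤) (hn : 1 < Nat.card N) (hk : N.index * Nat.card N = E.ncard + 2 * Nat.card N)
    (hne : ¬(N.index = 4 ∧ Nat.card N = 2)) :
    IsProperDivisibleDesignCayley (N.map ι) (dihedralSet ι b (N : Set A)ᶜ E)
      (2 * (N.index * Nat.card N)) (Nat.card N * (N.index - 1) + E.ncard)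
      (E.ncard + (Nat.card N + l1)) (E.ncard + l2) (2 * N.index) (Nat.card N) := by
  have h_card : Nat.card A = N.index * Nat.card N := by rw [mul_comm, N.card_mul_index]
  have h_index : 0 < N.index := Nat.pos_of_ne_zero Subgroup.index_ne_zero_of_finite
  refine ⟨hι.inv_dihedralSet_compl, ?_, ?_, fun g ↦ ?_, fun g ↦ ?_, fun g h hgh ↦ ?_, ?_,
    by lia, hn⟩
  · rw [← map_one ι, hι.map_mem_dihedralSet]
    exact not_not.2 N.one_mem
  · rw [← Nat.card_eq_fintype_card, hι.natCard_eq, h_card]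
  · exact (natCard_mul_inv_mem (N.map ι : Set G) g).trans
      ((ncard_coe_subgroup _).trans (Subgroup.card_map_of_injective hι.injective))
  · have h_compl := Set.ncard_add_ncard_compl (N : Set A)
    rw [ncard_coe_subgroup, h_card] at h_compl
    rw [natCard_mul_inv_mem, hι.ncard_dihedralSet, Nat.mul_sub_one, mul_comm]
    lia
  · rw [natCard_mul_inv_mem_and_mul_inv_mem hι.inv_dihedralSet_compl,
      hι.ncard_inter_smul hE hμ hN hk (mul_inv_eq_one.not.2 hgh)]
  · exact (add_right_injective E.ncard).ne (hE.card_add_ne hμ hN hn hk hne)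

theorem dihedral_ddg_eq2_general [Finite A] {G : Type*} [Group G] [Fintype G] {ι : A →* G} {b : G}
    (hι : IsGeneralizedDihedral ι b) {N : Subgroup A} {E : Set A} {l1 l2 μ m n k : ℕ}
    (hE : IsDivisibleDifferenceSet N E l1 l2) (hμ : IntersectionCondition N E μ)
    (hm : N.index = m) (hn : Nat.card N = n) (hk : E.ncard = k) (hm1 : 1 < m)
    (hn1 : 1 < n) (hkmn : m * n = k + 2 * n) (hne : ¬(m = 4 ∧ n = 2)) :
    ∃ l1' l2' : ℕ,
      (l1' : ℚ) = (n : ℚ) * ((m : ℚ) - 1)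
        + (k : ℚ) * ((k : ℚ) - (m : ℚ)) / (((n : ℚ) - 1) * (m : ℚ)) ∧
      (l2' : ℚ) = (n : ℚ) * ((m : ℚ) - 2) + (k : ℚ) ^ 2 / ((m : ℚ) * (n : ℚ)) ∧
      IsProperDivisibleDesignCayley (N.map ι) (dihedralSet ι b (N : Set A)ᶜ E)
        (2 * (m * n)) (n * (m - 1) + k) l1' l2' (2 * m) n := by
  subst hm hn hk
  have hN : N ≠ ⊤ := fun h ↦ hm1.ne' (Subgroup.index_eq_one.2 h)
  have h_kmn : (N.index * Nat.card N : ℚ) = E.ncard + 2 * Nat.card N := by exact_mod_cast hkmn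
  refine ⟨E.ncard + (Nat.card N + l1), E.ncard + l2, ?_, ?_,
    hι.isProperDivisibleDesignCayley hE hμ hN hn1 hkmn hne⟩
  · rw [← hE.lambda_one_eq hμ hn1]
    push_cast
    linear_combination -h_kmn
  · rw [← hE.lambda_two_eq hμ hN]
    push_cast
    linear_combination -h_kmn

end DihedralCayleyGraph

/-- for a divisible difference set `D` relative to `N ≤ A` with
`m, n > 1`, `k ≤ mn − k`, satisfying the intersection condition, with `k_{7−i} = 2n`
for a fixed `i ∈ {3,4}` and `(m,n,k) ≠ (4,2,4)`, the Cayley graph `Cay(G, X2 ∪ Xᵢ)`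
over `G = Dih(A)` is a proper divisible design graph with parameters `v' = 2mn`,
`k' = n(m−1) + kᵢ`, `λ1' = n(m−1) + kᵢ(kᵢ−m)/((n−1)m)`, `λ2' = n(m−2) + kᵢ²/(mn)`,
`m' = 2m`, `n' = n`, with canonical partition into the right cosets of `N` in `G`. -/
theorem dihedral_ddg_eq2
    (A : Type*) [CommGroup A] [Fintype A] [DecidableEq A]
    (G : Type*) [Group G] [Fintype G]
    (ι : A →* G) (hinj : Function.Injective ι)
    (b : G) (hb2 : b * b = 1) (hb1 : b ≠ 1)
    (hbconj : ∀ a : A, b * ι a * b⁻¹ = ι a⁻¹)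
    (hbnot : b ∉ Set.range ι)
    (hcardG : Fintype.card G = 2 * Fintype.card A)
    (hdecomp : ∀ g : G, (∃ a, g = ι a) ∨ (∃ a, g = ι a * b))
    (N : Subgroup A) (hNtop : N ≠ ⊤) (hNbot : N ≠ ⊥)
    (D : Set A) (hDne : D.Nonempty)
    (m n k l1 l2 : ℕ) (hm : N.index = m) (hn : Nat.card N = n)
    (hk : Nat.card D = k) (hm1 : 1 < m) (hn1 : 1 < n)
    (hdds : ∀ g : A, g ≠ 1 →
      Nat.card {pr : A × A // pr.1 ∈ D ∧ pr.2 ∈ D ∧ pr.1 * pr.2⁻¹ = g}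
        = if g ∈ N then l1 else l2)
    (hic : ∃ μ : ℕ, ∀ g : A, Nat.card {x : A // x ∈ D ∧ x * g⁻¹ ∈ N} = μ)
    (hkle : k ≤ m * n - k) (hkmn : k ≤ m * n)
    (hne : ¬(m = 4 ∧ n = 2 ∧ k = 4))
    (X2 : Set G) (hX2 : X2 = ι '' ((Set.univ : Set A) \ (N : Set A))) :
    ∀ (Xi : Set G) (ki kj : ℕ),
      ((Xi = (fun a => ι a * b) '' D ∧ ki = k ∧ kj = m * n - k) ∨
        (Xi = (fun a => ι a * b) '' ((Set.univ : Set A) \ D) ∧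
          ki = m * n - k ∧ kj = k)) →
      kj = 2 * n →
      ∃ l1' l2' : ℕ,
        (l1' : ℚ) = (n : ℚ) * ((m : ℚ) - 1)
            + (ki : ℚ) * ((ki : ℚ) - (m : ℚ)) / (((n : ℚ) - 1) * (m : ℚ)) ∧
        (l2' : ℚ) = (n : ℚ) * ((m : ℚ) - 2) + (ki : ℚ) ^ 2 / ((m : ℚ) * (n : ℚ)) ∧
        (X2 ∪ Xi)⁻¹ = X2 ∪ Xi ∧
        (1 : G) ∉ X2 ∪ Xi ∧
        Fintype.card G = 2 * (m * n) ∧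
        (∀ g : G, Nat.card {x : G // x * g⁻¹ ∈ ι '' (N : Set A)} = n) ∧
        (∀ g : G, Nat.card {x : G // x * g⁻¹ ∈ X2 ∪ Xi} = n * (m - 1) + ki) ∧
        (∀ g h : G, g ≠ h →
          Nat.card {x : G // x * g⁻¹ ∈ X2 ∪ Xi ∧ x * h⁻¹ ∈ X2 ∪ Xi}
            = if g * h⁻¹ ∈ ι '' (N : Set A) then l1' else l2') ∧
        l1' ≠ l2' ∧ 1 < 2 * m ∧ 1 < n := by
  have hι : IsGeneralizedDihedral ι b := ⟨hinj, hb2, hbconj, hbnot, hdecomp⟩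
  obtain ⟨μ, hμ : IntersectionCondition N D μ⟩ := hic
  replace hdds : IsDivisibleDifferenceSet N D l1 l2 := hdds
  have hcardA : Nat.card A = m * n := by rw [← hm, ← hn, mul_comm, N.card_mul_index]
  rw [Nat.card_coe_set_eq] at hk
  have hk_compl : Dᶜ.ncard = m * n - k := by
    have := Set.ncard_add_ncard_compl D
    lia
  simp only [hX2, ← Set.compl_eq_univ_sdiff]
  rintro Xi ki kj (⟨rfl, rfl, rfl⟩ | ⟨rfl, rfl, rfl⟩) hkj
  · exact dihedral_ddg_eq2_general hι hdds hμ hm hn hk hm1 hn1 (by lia) (by lia)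
  · exact dihedral_ddg_eq2_general hι hdds.compl hμ.compl hm hn hk_compl hm1 hn1
      (by lia) (by lia)
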